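/- Let n, l be positive integers and p a prime such that p^l divides n but p^{l+1} does not divide n, and let S be a subset of Z_n with 0 ∉ S, S = −S, and |S| = p^l − 1. If the circulant graph Cay(Z_n, S) admits a perfect code, then for every j ∈ {1, 2, …, l}, the p^j-th cyclotomic polynomial λ_{p^j}(x) divides the polynomial f_{S∪{0}}(x) in Z[x]. -/

import Mathlib

/-!
A perfect code `C` in `Cay(Z_n, S)` is the same thing as a tiling `Z_n = (S ∪ {0}) ⊕ C`. Evaluating
`f_{S ∪ {0}} * f_C` at a primitive `m`-th root of unity, where `1 < m ∣ n`, gives the sum of a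
nontrivial character of `Z_n`, which is `0`; hence `λ_m` divides `f_{S ∪ {0}}` or `f_C`. For
`m = p ^ j` the second case is impossible: `λ_{p ^ j}(1) = p` would divide `f_C(1) = |C|`, whereas
`|S ∪ {0}|` already accounts for every factor `p` of `n = |S ∪ {0}| * |C|`.
-/

open Polynomial

/-- The circulant graph `Cay(Z_n, S)`: vertices are `ZMod n`, and `u, v` are adjacent
iff `v - u ∈ S` (here symmetrised; when `S = -S` this agrees with the usual definition). -/
def circulantGraph (n : ℕ) (S : Finset (ZMod n)) : SimpleGraph (ZMod n) :=
  SimpleGraph.fromRel (fun u v => v - u ∈ S)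

/-- `C` is a perfect code in `G`: an independent set such that every vertex outside `C`
is adjacent to exactly one vertex of `C`. -/
def IsPerfectCode {V : Type*} (G : SimpleGraph V) (C : Set V) : Prop :=
  (∀ u ∈ C, ∀ v ∈ C, ¬ G.Adj u v) ∧ ∀ v, v ∉ C → ∃! c, c ∈ C ∧ G.Adj v c

/-- `C` is a total perfect code in `G`: every vertex is adjacent to exactly one vertex of `C`. -/
def IsTotalPerfectCode {V : Type*} (G : SimpleGraph V) (C : Set V) : Prop :=
  ∀ v, ∃! c, c ∈ C ∧ G.Adj v c

theorem isPerfectCode_iff_existsUnique {V : Type*} {G : SimpleGraph V} {C : Set V} :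
    IsPerfectCode G C ↔ ∀ v, ∃! c, c ∈ C ∧ (v = c ∨ G.Adj v c) := by
  refine ⟨fun ⟨hind, hdom⟩ v => ?_, fun h => ⟨fun u hu v hv huv => ?_, fun v hv => ?_⟩⟩
  · by_cases hv : v ∈ C
    · refine ⟨v, ⟨hv, Or.inl rfl⟩, ?_⟩
      rintro c ⟨hc, rfl | hvc⟩
      · rfl
      · exact absurd hvc (hind v hv c hc)
    · refine (existsUnique_congr fun c => and_congr_right fun hc => ?_).mpr (hdom v hv)
      exact or_iff_right (ne_of_mem_of_not_mem hc hv).symm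
  · exact huv.ne ((h u).unique ⟨hu, Or.inl rfl⟩ ⟨hv, Or.inr huv⟩)
  · refine (existsUnique_congr fun c => and_congr_right fun hc => ?_).mp (h v)
    exact or_iff_right (ne_of_mem_of_not_mem hc hv).symm

theorem isPerfectCode_circulantGraph_iff_isComplement {G : Type*} [AddGroup G] {S C : Set G}
    (hS : ∀ s ∈ S, -s ∈ S) :
    IsPerfectCode (SimpleGraph.circulantGraph S) C ↔ AddSubgroup.IsComplement (insert 0 S) C := by
  have adj_or_eq (v c : G) :
      (v = c ∨ (SimpleGraph.circulantGraph S).Adj v c) ↔ v - c ∈ insert 0 S := by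
    have : c - v ∈ S → v - c ∈ S := fun h => neg_sub c v ▸ hS _ h
    simp only [SimpleGraph.circulantGraph_adj, Set.mem_insert_iff, sub_eq_zero]
    tauto
  simp only [isPerfectCode_iff_existsUnique, adj_or_eq,
    AddSubgroup.isComplement_iff_existsUnique_add_neg_mem, ← sub_eq_add_neg]
  refine forall_congr' fun v => ⟨?_, ?_⟩
  · rintro ⟨c, ⟨hc, hvc⟩, huniq⟩
    exact ⟨⟨c, hc⟩, hvc, fun d hd => Subtype.ext (huniq d ⟨d.2, hd⟩)⟩
  · rintro ⟨c, hvc, huniq⟩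
    exact ⟨c, ⟨c.2, hvc⟩, fun d hd => congrArg Subtype.val (huniq ⟨d, hd.1⟩ hd.2)⟩

theorem circulantGraph_eq_simpleGraph_circulantGraph (n : ℕ) (S : Finset (ZMod n)) :
    circulantGraph n S = SimpleGraph.circulantGraph (S : Set (ZMod n)) := by
  ext u v
  simp only [circulantGraph, SimpleGraph.fromRel_adj, SimpleGraph.circulantGraph_adj,
    Finset.mem_coe, or_comm]

theorem sum_addChar_mul_sum_addChar_of_isComplement {G R : Type*} [AddGroup G] [Fintype G]
    [Semiring R] (ψ : AddChar G R) {A B : Finset G}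
    (h : AddSubgroup.IsComplement (A : Set G) (B : Set G)) :
    (∑ a ∈ A, ψ a) * ∑ b ∈ B, ψ b = ∑ g, ψ g := by
  calc (∑ a ∈ A, ψ a) * ∑ b ∈ B, ψ b
      = ∑ x : A × B, ψ (x.1 + x.2) := by
        simp only [AddChar.map_add_eq_mul, Fintype.sum_prod_type, ← Finset.sum_mul_sum,
          Finset.sum_coe_sort A ψ, Finset.sum_coe_sort B ψ]
    _ = ∑ g, ψ g := h.sum_comp ψ

/-- The polynomial `f_A(x) = ∑_{a ∈ A} x ^ a` attached to `A ⊆ Z_n`, known as the mask polynomial of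
`A` in the theory of tilings. For `n ≠ 0` the exponent `a.val` is the representative of `a` in
`{0, …, n - 1}`. -/
noncomputable def maskPolynomial {n : ℕ} (A : Finset (ZMod n)) : ℤ[X] :=
  ∑ a ∈ A, X ^ a.val

theorem eval_one_maskPolynomial {n : ℕ} (A : Finset (ZMod n)) :
    (maskPolynomial A).eval 1 = A.card := by
  simp [maskPolynomial, eval_finsetSum]

theorem aeval_maskPolynomial {n : ℕ} [NeZero n] {R : Type*} [CommRing R] {ζ : R} (hζ : ζ ^ n = 1)
    (A : Finset (ZMod n)) :
    aeval ζ (maskPolynomial A) = ∑ a ∈ A, AddChar.zmodChar n hζ a := by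
  simp [maskPolynomial, AddChar.zmodChar_apply]

theorem cyclotomic_dvd_iff_aeval_eq_zero {K : Type*} [Field K] [CharZero K] {m : ℕ} (hm : 0 < m)
    {ζ : K} (hζ : IsPrimitiveRoot ζ m) {f : ℤ[X]} : cyclotomic m ℤ ∣ f ↔ aeval ζ f = 0 := by
  rw [cyclotomic_eq_minpoly hζ hm, minpoly.isIntegrallyClosed_dvd_iff (hζ.isIntegral hm)]

theorem prime_dvd_eval_one_of_cyclotomic_prime_pow_dvd {p j : ℕ} (hp : p.Prime) (hj : j ≠ 0)
    {f : ℤ[X]} (hf : cyclotomic (p ^ j) ℤ ∣ f) : (p : ℤ) ∣ f.eval 1 := by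
  have : Fact p.Prime := ⟨hp⟩
  obtain ⟨k, rfl⟩ := Nat.exists_eq_succ_of_ne_zero hj
  simpa only [eval_one_cyclotomic_prime_pow] using eval_dvd (x := 1) hf

theorem cyclotomic_dvd_maskPolynomial_or_of_isComplement {n m : ℕ} [NeZero n] (hm : 1 < m)
    (hmn : m ∣ n) {A B : Finset (ZMod n)}
    (h : AddSubgroup.IsComplement (A : Set (ZMod n)) (B : Set (ZMod n))) :
    cyclotomic m ℤ ∣ maskPolynomial A ∨ cyclotomic m ℤ ∣ maskPolynomial B := by
  have hm₀ : 0 < m := zero_lt_one.trans hm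
  obtain ⟨ζ, hζ⟩ : ∃ ζ : ℂ, IsPrimitiveRoot ζ m := ⟨_, Complex.isPrimitiveRoot_exp m hm₀.ne'⟩
  have hζn : ζ ^ n = 1 := (hζ.pow_eq_one_iff_dvd n).mpr hmn
  have hχ : AddChar.zmodChar n hζn ≠ 1 := fun hχ => hζ.ne_one hm <| by
    simpa [hχ] using (AddChar.zmodChar_apply' hζn 1).symm
  rw [cyclotomic_dvd_iff_aeval_eq_zero hm₀ hζ, cyclotomic_dvd_iff_aeval_eq_zero hm₀ hζ,
    ← mul_eq_zero, aeval_maskPolynomial hζn, aeval_maskPolynomial hζn,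
    sum_addChar_mul_sum_addChar_of_isComplement _ h, AddChar.sum_eq_zero_of_ne_one hχ]

theorem cyclotomic_prime_pow_dvd_maskPolynomial_of_isComplement {n l p j : ℕ} (hp : p.Prime)
    (hndvd : ¬ p ^ (l + 1) ∣ n) {A B : Finset (ZMod n)}
    (h : AddSubgroup.IsComplement (A : Set (ZMod n)) (B : Set (ZMod n)))
    (hA : p ^ l ∣ A.card) (hj : j ≠ 0) (hjl : j ≤ l) :
    cyclotomic (p ^ j) ℤ ∣ maskPolynomial A := by
  have : NeZero n := ⟨fun hn => hndvd (hn ▸ dvd_zero _)⟩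
  have hAB : A.card * B.card = n := by simpa using h.card_mul_card
  have hpjn : p ^ j ∣ n := (pow_dvd_pow p hjl).trans (hA.trans ⟨_, hAB.symm⟩)
  refine (cyclotomic_dvd_maskPolynomial_or_of_isComplement
    (Nat.one_lt_pow hj hp.one_lt) hpjn h).resolve_right fun hB => hndvd ?_
  have hpB : p ∣ B.card := by
    exact_mod_cast eval_one_maskPolynomial B ▸
      prime_dvd_eval_one_of_cyclotomic_prime_pow_dvd hp hj hB
  exact hAB ▸ pow_succ p l ▸ mul_dvd_mul hA hpB

theorem cyclotomic_primePow_dvd_fS_of_perfectCode_general {n l p : ℕ} (hp : p.Prime)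
    (hndvd : ¬ p ^ (l + 1) ∣ n) {S : Finset (ZMod n)} (hSneg : ∀ s ∈ S, -s ∈ S)
    (hcard : p ^ l ∣ (insert 0 S).card)
    (hex : ∃ C : Set (ZMod n), IsPerfectCode (circulantGraph n S) C) {j : ℕ} (hj : j ≠ 0)
    (hjl : j ≤ l) :
    cyclotomic (p ^ j) ℤ ∣ maskPolynomial (insert 0 S) := by
  have : NeZero n := ⟨fun hn => hndvd (hn ▸ dvd_zero _)⟩
  obtain ⟨C, hC⟩ := hex
  lift C to Finset (ZMod n) using C.toFinite
  rw [circulantGraph_eq_simpleGraph_circulantGraph,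
    isPerfectCode_circulantGraph_iff_isComplement hSneg, ← Finset.coe_insert] at hC
  exact cyclotomic_prime_pow_dvd_maskPolynomial_of_isComplement hp hndvd hC hcard hj hjl

/-- **Claim 3** in the proof of Theorem 1.2: if `p^l ∥ n`, `|S| = p^l - 1`, and `Cay(Z_n, S)`
admits a perfect code, then `λ_{p^j}(x)` divides `f_{S∪{0}}(x)` for every `j ∈ {1, …, l}`. -/
theorem cyclotomic_primePow_dvd_fS_of_perfectCode
    (n l : ℕ) (hn : 0 < n) (hl : 0 < l) (p : ℕ) (hp : p.Prime)
    (hdvd : p ^ l ∣ n) (hndvd : ¬ p ^ (l + 1) ∣ n)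
    (S : Finset (ZMod n)) (h0S : (0 : ZMod n) ∉ S) (hSneg : ∀ s ∈ S, -s ∈ S)
    (hcard : S.card = p ^ l - 1)
    (hex : ∃ C : Set (ZMod n), IsPerfectCode (circulantGraph n S) C) :
    ∀ j : ℕ, 1 ≤ j → j ≤ l →
      Polynomial.cyclotomic (p ^ j) ℤ ∣ ∑ s ∈ insert (0 : ZMod n) S, (X : ℤ[X]) ^ s.val := by
  have hT : (insert 0 S).card = p ^ l := by
    rw [Finset.card_insert_of_notMem h0S, hcard, Nat.sub_add_cancel (Nat.pow_pos hp.pos)]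
  exact fun j hj hjl => cyclotomic_primePow_dvd_fS_of_perfectCode_general hp hndvd hSneg
    hT.symm.dvd hex (Nat.one_le_iff_ne_zero.mp hj) hjl
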